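/- arXiv:2502.00461 — 2 statements merged into one kernel-verified Lean document; each statement's English description precedes it below -/
import Mathlib

section
/- Let c : Fin 2 → Fin 2 → Fin 2 → ℂ be a nonzero array (the coefficients of a 3-qubit pure state in ℙ⁷). There exist x, y, w : Fin 2 → ℂ such that c i j k = x i · y j · w k for all i, j, k if and only if both of the following families of 2×2 minor equations hold: (i) for all i, i', j, j', k, k': c i j k · c i' j' k' = c i j' k' · c i' j k (vanishing of the 2×2 minors of the flattening with rows indexed by i and columns by (j,k)), and (ii) for all i, i', j, j', k, k': c i j k · c i' j' k' = c i j k' · c i' j' k (vanishing of the 2×2 minors of the flattening with rows indexed by (i,j) and columns by k). -/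
/-!
A matrix with vanishing `2 × 2` minors and a nonzero entry `A a b` is the outer product of its
column `b`, divided by `A a b`, and its row `a`. Applied to the flattening `i | (j, k)`, this
splits off a factor `u`, and `c` is determined by `u` and any slice `c a` with `u a ≠ 0`. That slice
is a block of rows of the flattening `(i, j) | k`, so its minors vanish too and it splits in turn.
-/

open Matrix

section Matrix

variable {m n R K : Type*}

/-- The `2 × 2` minors of `A` vanish. The equations are written without subtraction and with
repeated indices allowed, so that they make sense over any multiplicative structure. -/
def TwoMinorsVanish [Mul R] (A : Matrix m n R) : Prop :=
  ∀ i i' j j', A i j * A i' j' = A i j' * A i' j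

theorem twoMinorsVanish_vecMulVec [CommSemigroup R] (u : m → R) (v : n → R) :
    TwoMinorsVanish (vecMulVec u v) := fun i i' j j' => by
  simp only [vecMulVec_apply]
  ac_rfl

theorem TwoMinorsVanish.eq_vecMulVec_of_ne_zero [CommGroupWithZero K] {A : Matrix m n K}
    (hA : TwoMinorsVanish A) {a : m} {b : n} (hab : A a b ≠ 0) :
    A = vecMulVec (fun i => A i b / A a b) (A a) := by
  ext i j
  rw [vecMulVec_apply, div_mul_eq_mul_div, eq_div_iff hab]
  exact hA i a j b

theorem TwoMinorsVanish.exists_eq_vecMulVec [CommGroupWithZero K] {A : Matrix m n K}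
    (hA : TwoMinorsVanish A) : ∃ u v, A = vecMulVec u v := by
  by_cases hzero : ∀ a b, A a b = 0
  · exact ⟨0, 0, by ext i j; simp [hzero i j]⟩
  · push Not at hzero
    obtain ⟨a, b, hab⟩ := hzero
    exact ⟨_, _, hA.eq_vecMulVec_of_ne_zero hab⟩

end Matrix

section Flattening

variable {ι κ μ R K : Type*}

/-- The flattening `i | (j, k)` of a three-index array. -/
def flattenFirst (c : ι → κ → μ → R) : Matrix ι (κ × μ) R :=
  of fun i p => c i p.1 p.2

/-- The flattening `(i, j) | k` of a three-index array. -/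
def flattenLast (c : ι → κ → μ → R) : Matrix (ι × κ) μ R :=
  of fun p k => c p.1 p.2 k

theorem twoMinorsVanish_flattenFirst_iff [Mul R] {c : ι → κ → μ → R} :
    TwoMinorsVanish (flattenFirst c) ↔
      ∀ i i' j j' k k', c i j k * c i' j' k' = c i j' k' * c i' j k :=
  ⟨fun h i i' j j' k k' => h i i' (j, k) (j', k'),
    fun h i i' p p' => h i i' p.1 p'.1 p.2 p'.2⟩

theorem twoMinorsVanish_flattenLast_iff [Mul R] {c : ι → κ → μ → R} :
    TwoMinorsVanish (flattenLast c) ↔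
      ∀ i i' j j' k k', c i j k * c i' j' k' = c i j k' * c i' j' k :=
  ⟨fun h i i' j j' k k' => h (i, j) (i', j') k k',
    fun h p p' k k' => h p.1 p'.1 p.2 p'.2 k k'⟩

theorem flattenFirst_mul_mul [Semigroup R] (x : ι → R) (y : κ → R) (w : μ → R) :
    flattenFirst (fun i j k => x i * y j * w k) = vecMulVec x fun p => y p.1 * w p.2 := by
  ext i p
  exact mul_assoc _ _ _

theorem flattenLast_mul_mul [Mul R] (x : ι → R) (y : κ → R) (w : μ → R) :
    flattenLast (fun i j k => x i * y j * w k) = vecMulVec (fun p => x p.1 * y p.2) w :=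
  rfl

theorem TwoMinorsVanish.slice [Mul R] {c : ι → κ → μ → R}
    (hc : TwoMinorsVanish (flattenLast c)) (a : ι) : TwoMinorsVanish (of (c a)) :=
  fun j j' => hc (a, j) (a, j')

theorem exists_eq_mul_mul_of_twoMinorsVanish [CommGroupWithZero K] {c : ι → κ → μ → K}
    (hfirst : TwoMinorsVanish (flattenFirst c)) (hlast : TwoMinorsVanish (flattenLast c)) :
    ∃ (x : ι → K) (y : κ → K) (w : μ → K), ∀ i j k, c i j k = x i * y j * w k := by
  obtain ⟨u, v, huv⟩ := hfirst.exists_eq_vecMulVec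
  have c_eq (i j k) : c i j k = u i * v (j, k) := congr_fun₂ huv i (j, k)
  by_cases hu : ∀ a, u a = 0
  · exact ⟨0, 0, 0, fun i j k => by simp [c_eq, hu i]⟩
  push Not at hu
  obtain ⟨a, ha⟩ := hu
  obtain ⟨y, w, hyw⟩ := (hlast.slice a).exists_eq_vecMulVec
  have slice_eq (j k) : c a j k = y j * w k := congr_fun₂ hyw j k
  refine ⟨fun i => u i / u a, y, w, fun i j k => ?_⟩
  calc
    c i j k = u i / u a * (u a * v (j, k)) := by rw [c_eq, ← mul_assoc, div_mul_cancel₀ _ ha]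
    _ = u i / u a * y j * w k := by rw [← c_eq, slice_eq, mul_assoc]

end Flattening

theorem three_qubit_separable_iff_segre_general {ι κ μ K : Type*} [CommGroupWithZero K]
    (c : ι → κ → μ → K) :
    (∃ (x : ι → K) (y : κ → K) (w : μ → K), ∀ i j k, c i j k = x i * y j * w k) ↔
      ((∀ i i' j j' k k', c i j k * c i' j' k' = c i j' k' * c i' j k) ∧
       (∀ i i' j j' k k', c i j k * c i' j' k' = c i j k' * c i' j' k)) := by
  rw [← twoMinorsVanish_flattenFirst_iff, ← twoMinorsVanish_flattenLast_iff]
  constructor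
  · rintro ⟨x, y, w, h⟩
    obtain rfl : c = fun i j k => x i * y j * w k := by
      ext i j k
      exact h i j k
    rw [flattenFirst_mul_mul, flattenLast_mul_mul]
    exact ⟨twoMinorsVanish_vecMulVec _ _, twoMinorsVanish_vecMulVec _ _⟩
  · rintro ⟨hfirst, hlast⟩
    exact exists_eq_mul_mul_of_twoMinorsVanish hfirst hlast

/-- A nonzero 3-qubit coefficient array `c : Fin 2 → Fin 2 → Fin 2 → ℂ` is a
product state, `c i j k = x i * y j * w k`, iff the `2×2` minors of the two
flattenings `i | (j,k)` and `(i,j) | k` all vanish. -/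
theorem three_qubit_separable_iff_segre
    (c : Fin 2 → Fin 2 → Fin 2 → ℂ) (hc : c ≠ 0) :
    (∃ x y w : Fin 2 → ℂ, ∀ i j k, c i j k = x i * y j * w k) ↔
      ((∀ i i' j j' k k' : Fin 2,
          c i j k * c i' j' k' = c i j' k' * c i' j k) ∧
       (∀ i i' j j' k k' : Fin 2,
          c i j k * c i' j' k' = c i j k' * c i' j' k)) :=
  three_qubit_separable_iff_segre_general c
end

section
/- Let n ≥ 1 and let c : (Fin n → Fin 2) → ℂ be a nonzero function (the coefficients of an n-qubit pure state in ℙ^{2ⁿ−1}). There exist vectors x : Fin n → (Fin 2 → ℂ) such that c f = ∏_{i ∈ Fin n} x i (f i) for every f : Fin n → Fin 2, if and only if for every index i ∈ Fin n and all f, g : Fin n → Fin 2 one has c f · c g = c (update f i (g i)) · c (update g i (f i)), where update f i b replaces the i-th value of f by b. (These quadratic equations cut out the generalized Segre variety, the image of the n-fold Segre embedding ℙ¹ × ⋯ × ℙ¹ → ℙ^{2ⁿ−1}.) -/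
/-!
Fix a label `g` with `c g ≠ 0`. Every label `f` is reached from `g` by changing one entry at a time,
and each quadric trades one such change for the factor `c (update g i (f i)) / c g`. Hence `c f` is
`c g` times the product of these ratios, the `i`-th of which depends on `f i` only.
-/

section SegreQuadrics

open Finset Function

variable {ι M : Type*} {α : ι → Type*}

/-- The coefficient function of an elementary tensor (in quantum information, of a product state):
a product of functions of one index each. The factors `x i` may vanish, so `0` is included as soon
as `ι` is nonempty. -/
def IsElementaryTensor [Fintype ι] [CommMonoid M] (c : (∀ i, α i) → M) : Prop :=
  ∃ x : ∀ i, α i → M, ∀ f, c f = ∏ i, x i (f i)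

/-- The quadratic equations of the generalized Segre variety, stating that `c f * c g` is unchanged
when the labels `f` and `g` exchange one entry. -/
def SatisfiesSegreQuadrics [DecidableEq ι] [Mul M] (c : (∀ i, α i) → M) : Prop :=
  ∀ i f g, c f * c g = c (update f i (g i)) * c (update g i (f i))

theorem isElementaryTensor_zero [Fintype ι] [Nonempty ι] [CommMonoidWithZero M] :
    IsElementaryTensor (0 : (∀ i, α i) → M) :=
  ⟨0, fun _ => by simp⟩

theorem IsElementaryTensor.const_mul [Fintype ι] [CommMonoid M] [Nonempty ι]
    {c : (∀ i, α i) → M} (hc : IsElementaryTensor c) (a : M) :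
    IsElementaryTensor fun f => a * c f := by
  classical
  obtain ⟨x, hx⟩ := hc
  obtain ⟨i₀⟩ := ‹Nonempty ι›
  refine ⟨fun i b => Pi.mulSingle (M := fun _ => M) i₀ a i * x i b, fun f => ?_⟩
  simp only [prod_mul_distrib, Fintype.prod_pi_mulSingle', hx]

variable [DecidableEq ι]

section CommMonoid

variable [CommMonoid M] {c : (∀ i, α i) → M}

theorem IsElementaryTensor.satisfiesSegreQuadrics [Fintype ι] (hc : IsElementaryTensor c) :
    SatisfiesSegreQuadrics c := by
  obtain ⟨x, hx⟩ := hc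
  intro i f g
  simp only [hx, ← prod_mul_distrib]
  refine prod_congr rfl fun j _ => ?_
  obtain rfl | hji := eq_or_ne j i
  · simp only [update_self, mul_comm]
  · simp only [update_of_ne hji]

namespace SatisfiesSegreQuadrics

theorem mul_apply_piecewise_insert (hc : SatisfiesSegreQuadrics c) (f g : ∀ i, α i) {i : ι}
    {s : Finset ι} (hi : i ∉ s) :
    c g * c ((insert i s).piecewise f g) = c (s.piecewise f g) * c (update g i (f i)) := by
  have exchange := hc i (s.piecewise f g) (update g i (f i))
  rw [update_self, piecewise_eq_of_notMem _ _ _ hi, update_idem, update_eq_self,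
    ← piecewise_insert] at exchange
  rw [exchange, mul_comm]

theorem pow_card_mul_apply_piecewise (hc : SatisfiesSegreQuadrics c) (f g : ∀ i, α i)
    (s : Finset ι) :
    c g ^ #s * c (s.piecewise f g) = c g * ∏ i ∈ s, c (update g i (f i)) := by
  induction s using Finset.induction_on with
  | empty => simp
  | insert i s hi ih =>
    calc c g ^ #(insert i s) * c ((insert i s).piecewise f g)
        = c g ^ #s * (c g * c ((insert i s).piecewise f g)) := by
          rw [card_insert_of_notMem hi, pow_succ, mul_assoc]
      _ = c g ^ #s * c (s.piecewise f g) * c (update g i (f i)) := by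
          rw [hc.mul_apply_piecewise_insert f g hi, mul_assoc]
      _ = c g * ∏ j ∈ insert i s, c (update g j (f j)) := by
          rw [ih, prod_insert hi, mul_assoc, mul_comm (c (update g i (f i)))]

end SatisfiesSegreQuadrics

end CommMonoid

section CommGroupWithZero

variable [Fintype ι] [CommGroupWithZero M] {c : (∀ i, α i) → M}

theorem SatisfiesSegreQuadrics.apply_eq_mul_prod_div (hc : SatisfiesSegreQuadrics c)
    {g : ∀ i, α i} (hg : c g ≠ 0) (f : ∀ i, α i) :
    c f = c g * ∏ i, c (update g i (f i)) / c g := by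
  have cleared := hc.pow_card_mul_apply_piecewise f g univ
  rw [piecewise_univ] at cleared
  rw [prod_div_distrib, prod_const, ← mul_div_assoc, eq_div_iff (pow_ne_zero _ hg), mul_comm,
    cleared]

theorem SatisfiesSegreQuadrics.isElementaryTensor [Nonempty ι] (hc : SatisfiesSegreQuadrics c) :
    IsElementaryTensor c := by
  obtain rfl | hc₀ := eq_or_ne c 0
  · exact isElementaryTensor_zero
  obtain ⟨g, hg⟩ := ne_iff.mp hc₀
  have ratios : IsElementaryTensor fun f : ∀ i, α i => ∏ i, c (update g i (f i)) / c g :=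
    ⟨fun i b => c (update g i b) / c g, fun _ => rfl⟩
  rw [funext (hc.apply_eq_mul_prod_div hg)]
  exact ratios.const_mul (c g)

theorem n_qubit_separable_iff_segre_general [Nonempty ι] (c : (∀ i, α i) → M) :
    IsElementaryTensor c ↔ SatisfiesSegreQuadrics c :=
  ⟨IsElementaryTensor.satisfiesSegreQuadrics, SatisfiesSegreQuadrics.isElementaryTensor⟩

end CommGroupWithZero

end SegreQuadrics

/-- A nonzero `n`-qubit coefficient function `c : (Fin n → Fin 2) → ℂ` is a product
state, `c f = ∏ i, x i (f i)`, iff for every index `i` and all basis labels `f, g`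
one has `c f * c g = c (update f i (g i)) * c (update g i (f i))`.  These quadrics
cut out the generalized Segre variety in `ℙ^{2ⁿ−1}`. -/
theorem n_qubit_separable_iff_segre (n : ℕ) (hn : 1 ≤ n)
    (c : (Fin n → Fin 2) → ℂ) (hc : c ≠ 0) :
    (∃ x : Fin n → Fin 2 → ℂ, ∀ f : Fin n → Fin 2, c f = ∏ i, x i (f i)) ↔
      ∀ (i : Fin n) (f g : Fin n → Fin 2),
        c f * c g = c (Function.update f i (g i)) * c (Function.update g i (f i)) := by
  have : Nonempty (Fin n) := ⟨⟨0, hn⟩⟩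
  exact n_qubit_separable_iff_segre_general c
end
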